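/- Let X be a geodesic Ptolemy metric space and let Γ ⊂ ISO(X) act properly and cocompactly on X. Then every finitely generated free abelian subgroup Γ₀ of Γ is straight in Γ, i.e. the word norm of Γ₀ (with respect to some finite generating set of Γ₀) and the restriction to Γ₀ of the word norm of Γ (with respect to some finite generating set of Γ) are equivalent norms on Γ₀. -/

import Mathlib

/-!
Write `d` for the metric, `o` for a base point and identify `Γ₀` with `ℤᵏ`. The orbit length
`D g = d(o, g o)` is a length function on `Γ`, so it is at most a multiple of any word norm of `Γ`
coming from a finite generating set (one exists by the Schwarz–Milnor argument,
`finite_and_generated`). It remains to bound `D` on `Γ₀` from below by a multiple of the `ℓ¹` norm;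
the other inequality between the word norms is substitution of generators.

The Ptolemy inequality makes the distance to a point midpoint convex along geodesics
(`IsPtolemy.dist_midpoint_le`). If `x` minimizes the displacement of `α`, with minimal value `L`,
this forces `d(x, αⁿ x) ≥ n L` (`IsPtolemy.mul_le_dist_pow`), so the stable length of `α` is its
minimal displacement. Properness and cocompactness guarantee that minima are attained
(`exists_min_displacement`) and are bounded below by a common `δ > 0` over all elements of infinite
order (`exists_displacement_gap`). Hence the stable length of `D` is at least `δ` on every nonzero
vector of `ℤᵏ`. Such a discreteness bound prevents the stable length from degenerating along
irrational directions: by Dirichlet's simultaneous approximation it yields the desired linear lower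
bound (`exists_linear_lower_bound`).
-/


/-- A metric space is Ptolemy if `|xy|·|uv| ≤ |xu|·|yv| + |xv|·|yu|` for all points. -/
def IsPtolemy (X : Type*) [MetricSpace X] : Prop :=
  ∀ x y u v : X, dist x y * dist u v ≤ dist x u * dist y v + dist x v * dist y u

/-- `c` is a geodesic on `I` (parameterized proportionally to arclength with speed `l ≥ 0`). -/
def IsGeodesicOn {X : Type*} [MetricSpace X] (c : ℝ → X) (I : Set ℝ) : Prop :=
  ∃ l : ℝ, 0 ≤ l ∧ ∀ s ∈ I, ∀ t ∈ I, dist (c s) (c t) = l * |s - t|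

/-- A metric space is geodesic if every pair of points is joined by a geodesic. -/
def IsGeodesicSpace (X : Type*) [MetricSpace X] : Prop :=
  ∀ x y : X, ∃ c : ℝ → X, c 0 = x ∧ c 1 = y ∧ IsGeodesicOn c (Set.Icc 0 1)

/-- The word norm of `g` with respect to a generating set `S`: the length of the shortest word
in the elements of `S` and their inverses representing `g`. -/
noncomputable def wordNorm {G : Type*} [Group G] (S : Set G) (g : G) : ℕ :=
  sInf {n | ∃ l : List G, l.length = n ∧ (∀ a ∈ l, a ∈ S ∨ a⁻¹ ∈ S) ∧ l.prod = g}

open Filter Topology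

/-! ### Proper cocompact actions: finiteness and generation -/

lemma dist_smul_inv_mul {X G : Type*} [MetricSpace X] [Group G] [MulAction G X]
    [IsIsometricSMul G X] (γ β : G) (x y : X) :
    dist x ((γ⁻¹ * β) • y) = dist (γ • x) (β • y) := by
  rw [← dist_smul γ x, smul_smul, mul_inv_cancel_left]

/-- Properness at one point `x` bounds the number of group elements moving `x` close to any
other point `y`: two such elements differ by an element displacing `x` by less than `r`. -/
lemma finite_near_pair {X G : Type*} [MetricSpace X] [Group G] [MulAction G X]
    [IsIsometricSMul G X] {x : X} {r : ℝ}
    (hx : {γ : G | dist x (γ • x) < r}.Finite) (y : X) :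
    {γ : G | dist y (γ • x) < r / 2}.Finite := by
  rcases Set.eq_empty_or_nonempty {γ : G | dist y (γ • x) < r / 2} with h | ⟨γ₁, h₁⟩
  · simp [h]
  · refine (hx.image (fun γ => γ₁ * γ)).subset fun γ hγ => ⟨γ₁⁻¹ * γ, ?_, by simp⟩
    simp only [Set.mem_ofPred_eq] at *
    rw [dist_smul_inv_mul]
    have := dist_triangle_left (γ₁ • x) (γ • x) y
    linarith

/-- Uniform properness on a compact set, by covering `K` (once for the source point, once for the
target point) by balls adapted to the properness radii. -/
lemma exists_finite_near {X G : Type*} [MetricSpace X] [Group G] [MulAction G X]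
    [IsIsometricSMul G X]
    (hproper : ∀ x : X, ∃ r > 0, {γ : G | dist x (γ • x) < r}.Finite)
    {K : Set X} (hK : IsCompact K) :
    ∃ ε > 0, {γ : G | ∃ k ∈ K, ∃ k' ∈ K, dist k (γ • k') < ε}.Finite := by
  choose r hr hfin using hproper
  obtain ⟨t, htK, hcov⟩ := hK.elim_nhds_subcover (fun x => Metric.ball x (r x / 8))
    (fun x _ => Metric.ball_mem_nhds x (by linarith [hr x]))
  have hmin : ∃ ε > 0, ∀ x ∈ t, ε ≤ r x / 8 := by
    have h1 : ∀ᶠ ε in 𝓝[>] (0 : ℝ), ∀ x ∈ t, ε ≤ r x / 8 := by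
      rw [Filter.eventually_all_finset]
      intro x _
      exact eventually_nhdsWithin_of_eventually_nhds
        ((eventually_lt_nhds (by linarith [hr x])).mono fun _ h => h.le)
    obtain ⟨ε, h, hε⟩ := (h1.and self_mem_nhdsWithin).exists
    exact ⟨ε, hε, h⟩
  obtain ⟨ε, hε, hεr⟩ := hmin
  refine ⟨ε, hε, ?_⟩
  have hcov2 : ∀ x : X, ∃ s : Finset X, K ⊆ ⋃ y ∈ s, Metric.ball y (r x / 8) := by
    intro x
    obtain ⟨s, -, hs⟩ := hK.elim_nhds_subcover (fun y => Metric.ball y (r x / 8))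
      (fun y _ => Metric.ball_mem_nhds y (by linarith [hr x]))
    exact ⟨s, hs⟩
  choose s hs using hcov2
  have hbig : (⋃ x ∈ t, ⋃ y ∈ s x, {γ : G | dist y (γ • x) < r x / 2}).Finite := by
    refine t.finite_toSet.biUnion fun x _ => (s x).finite_toSet.biUnion fun y _ => ?_
    exact finite_near_pair (hfin x) y
  refine hbig.subset ?_
  rintro γ ⟨k, hk, k', hk', hd⟩
  obtain ⟨x, hx, hkx⟩ := Set.mem_iUnion₂.1 (hcov hk')
  obtain ⟨y, hy, hky⟩ := Set.mem_iUnion₂.1 (hs x hk)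
  refine Set.mem_iUnion₂.2 ⟨x, hx, Set.mem_iUnion₂.2 ⟨y, hy, ?_⟩⟩
  simp only [Set.mem_ofPred_eq, Metric.mem_ball] at *
  have h1 := dist_triangle4 y k (γ • k') (γ • x)
  rw [dist_smul, dist_comm y k] at h1
  have := hεr x hx
  linarith [hr x]

/-- If `K` and `β K` contain points at distance less than `(n + 2) * ε`, the point dividing
a geodesic in ratio `1 : n + 1` lies in some translate `γ K`, which splits `β` as `γ * (γ⁻¹ * β)`
with a short first factor and a remainder covering less than `(n + 1) * ε`. -/
lemma step_near {X G : Type*} [MetricSpace X] [Group G] [MulAction G X]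
    [IsIsometricSMul G X] (hgeo : IsGeodesicSpace X)
    {K : Set X} (hcov : ∀ x : X, ∃ γ : G, ∃ k ∈ K, γ • k = x) {ε : ℝ}
    (n : ℕ) {β : G} (hβ : ∃ k ∈ K, ∃ k' ∈ K, dist k (β • k') < (n + 2) * ε) :
    ∃ γ : G, (∃ k ∈ K, ∃ k' ∈ K, dist k (γ • k') < ε) ∧
      ∃ k ∈ K, ∃ k' ∈ K, dist k ((γ⁻¹ * β) • k') < (n + 1) * ε := by
  obtain ⟨k, hk, k', hk', hd⟩ := hβ
  obtain ⟨c, hc0, hc1, l, hl, hc⟩ := hgeo k (β • k')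
  have hn : (0 : ℝ) < n + 2 := by positivity
  have ht0 : (0 : ℝ) ≤ 1 / (n + 2) := by positivity
  have ht1 : 1 / ((n : ℝ) + 2) ≤ 1 := by
    rw [div_le_one hn]; linarith [(Nat.cast_nonneg n : (0 : ℝ) ≤ n)]
  have e01 := hc 0 (by simp) 1 (by simp)
  have e0 := hc 0 (by simp) _ ⟨ht0, ht1⟩
  have e1 := hc _ ⟨ht0, ht1⟩ 1 (by simp)
  rw [hc0] at e0 e01
  rw [hc1] at e1 e01
  obtain ⟨γ, m, hm, hγ⟩ := hcov (c (1 / (n + 2)))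
  have hl' : l < (n + 2) * ε := by simpa [e01] using hd
  refine ⟨γ, ⟨k, hk, m, hm, ?_⟩, m, hm, k', hk', ?_⟩
  · rw [hγ, e0, zero_sub, abs_neg, abs_of_nonneg ht0, mul_one_div, div_lt_iff₀ hn]
    linarith
  · rw [dist_smul_inv_mul, hγ, e1, abs_sub_comm, abs_of_nonneg (by linarith)]
    have : 1 - 1 / ((n : ℝ) + 2) = (n + 1) / (n + 2) := by field_simp; ring
    rw [this, mul_div_assoc', div_lt_iff₀ hn]
    have : (0 : ℝ) < n + 1 := by positivity
    nlinarith

/-- The Schwarz–Milnor argument: the elements moving `K` to within `(n + 1) * ε` of itself are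
finite in number and are products of elements moving `K` to within `ε` of itself. -/
lemma finite_and_generated {X G : Type*} [MetricSpace X] [Group G] [MulAction G X]
    [IsIsometricSMul G X] (hgeo : IsGeodesicSpace X)
    {K : Set X} (hcov : ∀ x : X, ∃ γ : G, ∃ k ∈ K, γ • k = x) {ε : ℝ}
    (hfin : {γ : G | ∃ k ∈ K, ∃ k' ∈ K, dist k (γ • k') < ε}.Finite) (n : ℕ) :
    {γ : G | ∃ k ∈ K, ∃ k' ∈ K, dist k (γ • k') < (n + 1) * ε}.Finite ∧
    {γ : G | ∃ k ∈ K, ∃ k' ∈ K, dist k (γ • k') < (n + 1) * ε} ⊆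
      Subgroup.closure {γ : G | ∃ k ∈ K, ∃ k' ∈ K, dist k (γ • k') < ε} := by
  induction n with
  | zero => exact ⟨by simpa using hfin, by simp⟩
  | succ n ih =>
    constructor
    · refine (hfin.image2 (fun a b => a * b) ih.1).subset fun β hβ => ?_
      obtain ⟨γ, h1, h2⟩ := step_near hgeo hcov n (β := β) (by
        simp only [Set.mem_ofPred_eq] at hβ; push_cast at hβ
        have e : (n : ℝ) + 2 = n + 1 + 1 := by ring
        rwa [e])
      exact ⟨γ, h1, γ⁻¹ * β, h2, by simp⟩
    · intro β hβ
      obtain ⟨γ, h1, h2⟩ := step_near hgeo hcov n (β := β) (by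
        simp only [Set.mem_ofPred_eq] at hβ; push_cast at hβ
        have e : (n : ℝ) + 2 = n + 1 + 1 := by ring
        rwa [e])
      have m1 : γ ∈ Subgroup.closure {γ : G | ∃ k ∈ K, ∃ k' ∈ K, dist k (γ • k') < ε} :=
        Subgroup.subset_closure h1
      simpa using mul_mem m1 (ih.2 h2)

lemma finite_displaced {X G : Type*} [MetricSpace X] [Group G] [MulAction G X]
    [IsIsometricSMul G X] (hgeo : IsGeodesicSpace X)
    {K : Set X} (hcov : ∀ x : X, ∃ γ : G, ∃ k ∈ K, γ • k = x) {ε : ℝ} (hε : 0 < ε)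
    (hfin : {γ : G | ∃ k ∈ K, ∃ k' ∈ K, dist k (γ • k') < ε}.Finite) (R : ℝ) :
    {γ : G | ∃ k ∈ K, dist k (γ • k) ≤ R}.Finite := by
  obtain ⟨n, hn⟩ := exists_nat_gt (R / ε)
  rw [div_lt_iff₀ hε] at hn
  refine (finite_and_generated hgeo hcov hfin n).1.subset ?_
  rintro γ ⟨k, hk, h⟩
  exact ⟨k, hk, k, hk, by nlinarith⟩

/-! ### Displacement of isometries -/

lemma continuous_displacement {X G : Type*} [MetricSpace X] [Group G] [MulAction G X]
    [IsIsometricSMul G X] (α : G) : Continuous fun x : X => dist x (α • x) :=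
  continuous_id.dist (isometry_smul X α).continuous

/-- Every element of a proper cocompact action attains its minimal displacement: translating points
into `K` replaces `α` by its conjugates, and only finitely many of these have displacement on `K`
below a given bound. -/
lemma exists_min_displacement {X G : Type*} [MetricSpace X] [Nonempty X] [Group G] [MulAction G X]
    [IsIsometricSMul G X] {K : Set X} (hK : IsCompact K)
    (hcov : ∀ x : X, ∃ γ : G, ∃ k ∈ K, γ • k = x)
    (hfin : ∀ R : ℝ, {γ : G | ∃ k ∈ K, dist k (γ • k) ≤ R}.Finite) (α : G) :
    ∃ x : X, ∀ y : X, dist x (α • x) ≤ dist y (α • y) := by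
  have hKne : K.Nonempty := by
    obtain ⟨-, k, hk, -⟩ := hcov (Classical.arbitrary X)
    exact ⟨k, hk⟩
  have hmin : ∀ β : G, ∃ k ∈ K, ∀ k' ∈ K, dist k (β • k) ≤ dist k' (β • k') := fun β =>
    hK.exists_isMinOn hKne (continuous_displacement β).continuousOn
  choose m hmK hm using hmin
  have hconj : ∀ (γ : G) (k : X), dist k ((γ⁻¹ * α * γ) • k) = dist (γ • k) (α • γ • k) := by
    intro γ k
    rw [mul_assoc, dist_smul_inv_mul, mul_smul]
  -- the conjugates of `α` whose minimal displacement on `K` does not exceed that of `α`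
  let D : Set G := {β | (∃ γ : G, β = γ⁻¹ * α * γ) ∧ dist (m β) (β • m β) ≤ dist (m α) (α • m α)}
  have hD : D.Finite := (hfin (dist (m α) (α • m α))).subset fun β hβ => ⟨m β, hmK β, hβ.2⟩
  have hαD : α ∈ D := ⟨⟨1, by simp⟩, le_rfl⟩
  obtain ⟨β, ⟨⟨γ, rfl⟩, hβα⟩, hβ⟩ := D.exists_min_image (fun β => dist (m β) (β • m β)) hD ⟨α, hαD⟩
  refine ⟨γ • m (γ⁻¹ * α * γ), fun y => ?_⟩
  obtain ⟨δ, k, hk, rfl⟩ := hcov y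
  rw [← hconj, ← hconj]
  refine le_trans ?_ (hm (δ⁻¹ * α * δ) k hk)
  by_cases h : δ⁻¹ * α * δ ∈ D
  · exact hβ _ h
  · have : ¬ dist (m (δ⁻¹ * α * δ)) ((δ⁻¹ * α * δ) • m (δ⁻¹ * α * δ)) ≤ dist (m α) (α • m α) :=
      fun h' => h ⟨⟨δ, rfl⟩, h'⟩
    linarith

/-- Elements of infinite order have uniformly positive displacement: up to conjugation only the
finitely many elements displacing some point of `K` by at most `1` matter, and each of these that
has infinite order has no fixed point, hence positive minimal displacement on `K`. -/
lemma exists_displacement_gap {X G : Type*} [MetricSpace X] [Group G] [MulAction G X]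
    [IsIsometricSMul G X]
    (hproper : ∀ x : X, ∃ r > 0, {γ : G | dist x (γ • x) < r}.Finite)
    {K : Set X} (hK : IsCompact K)
    (hcov : ∀ x : X, ∃ γ : G, ∃ k ∈ K, γ • k = x)
    (hfin : ∀ R : ℝ, {γ : G | ∃ k ∈ K, dist k (γ • k) ≤ R}.Finite) :
    ∃ ε > 0, ∀ α : G, ¬ IsOfFinOrder α → ∀ x : X, ε ≤ dist x (α • x) := by
  have hpos : ∀ α : G, ¬ IsOfFinOrder α → ∀ x : X, 0 < dist x (α • x) := by
    intro α hα x
    rw [dist_pos]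
    intro hx
    obtain ⟨r, hr, hfin⟩ := hproper x
    have hpow : ∀ n : ℕ, α ^ n • x = x := by
      intro n
      induction n with
      | zero => simp
      | succ n ih => rw [pow_succ, mul_smul, ← hx, ih]
    have hinf : (Set.range fun n : ℕ => α ^ n).Infinite :=
      Set.infinite_range_of_injective (injective_pow_iff_not_isOfFinOrder.2 hα)
    refine hinf (hfin.subset ?_)
    rintro _ ⟨n, rfl⟩
    simpa [hpow n] using hr
  have h1 : ∀ᶠ ε in 𝓝[>] (0 : ℝ), ∀ β ∈ {γ : G | ∃ k ∈ K, dist k (γ • k) ≤ 1},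
      ¬ IsOfFinOrder β → ∀ k ∈ K, ε ≤ dist k (β • k) := by
    rw [Filter.eventually_all_finite (hfin 1)]
    rintro β ⟨k₀, hk₀, -⟩
    by_cases hβ : IsOfFinOrder β
    · simp [hβ]
    obtain ⟨k, hk, hmin⟩ := hK.exists_isMinOn ⟨k₀, hk₀⟩ (continuous_displacement β).continuousOn
    refine eventually_nhdsWithin_of_eventually_nhds
      ((eventually_lt_nhds (hpos β hβ k)).mono fun ε h _ k' hk' => h.le.trans (hmin hk'))
  obtain ⟨ε, ⟨h, hε1⟩, hε⟩ := ((h1.and (eventually_nhdsWithin_of_eventually_nhds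
    (eventually_lt_nhds (zero_lt_one' ℝ)))).and self_mem_nhdsWithin).exists
  refine ⟨ε, hε, fun α hα x => ?_⟩
  obtain ⟨γ, k, hk, rfl⟩ := hcov x
  have hc : dist (γ • k) (α • γ • k) = dist k ((γ⁻¹ * α * γ) • k) := by
    rw [mul_assoc, dist_smul_inv_mul, mul_smul]
  rw [hc]
  have hα' : ¬ IsOfFinOrder (γ⁻¹ * α * γ) := by
    intro h'
    rw [isOfFinOrder_iff_pow_eq_one] at h' hα
    obtain ⟨n, hn, h'⟩ := h'
    refine hα ⟨n, hn, ?_⟩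
    have e := conj_pow (a := γ⁻¹) (b := α) (i := n)
    rw [inv_inv, h'] at e
    have e' : α ^ n = γ * (γ⁻¹ * α ^ n * γ) * γ⁻¹ := by group
    rw [e', ← e]; simp
  by_cases hk1 : dist k ((γ⁻¹ * α * γ) • k) ≤ 1
  · exact h _ ⟨k, hk, hk1⟩ hα' k hk
  · linarith

/-! ### Isometries of geodesic Ptolemy spaces -/

/-- In a Ptolemy space the distance to a point `p` is midpoint convex; this is the Ptolemy
inequality for `p`, `m`, `x`, `y`. -/
lemma IsPtolemy.dist_midpoint_le {X : Type*} [MetricSpace X] (hpt : IsPtolemy X)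
    {p x y m : X} (hx : dist x m = dist x y / 2) (hy : dist m y = dist x y / 2) :
    dist p m ≤ (dist p x + dist p y) / 2 := by
  rcases (dist_nonneg (x := x) (y := y)).eq_or_lt with h | h
  · have h1 : x = y := dist_eq_zero.1 h.symm
    have h2 : x = m := dist_eq_zero.1 (by rw [hx, ← h]; simp)
    subst h1 h2; linarith
  · have := hpt p m x y
    rw [dist_comm m y] at this
    rw [dist_comm m y] at hy
    rw [dist_comm m x, hx, hy] at this
    nlinarith

/-- At a point `x` of minimal displacement `L` of `α`, the orbit moves away at full speed. Comparing
the displacement of the midpoint `m` of `x` and `α x` with `L` shows that `α x` is a midpoint of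
`x` and `α² x`; then midpoint convexity makes `n ↦ d(x, αⁿ x)` a convex sequence with values
`0`, `L` at `0`, `1`. -/
lemma IsPtolemy.mul_le_dist_pow {X G : Type*} [MetricSpace X] [Group G] [MulAction G X]
    [IsIsometricSMul G X] (hgeo : IsGeodesicSpace X) (hpt : IsPtolemy X) {α : G} {x : X}
    (hx : ∀ y : X, dist x (α • x) ≤ dist y (α • y)) (n : ℕ) :
    n * dist x (α • x) ≤ dist x (α ^ n • x) := by
  obtain ⟨c, hc0, hc1, l, hl, hc⟩ := hgeo x (α • x)
  have e01 := hc 0 (by simp) 1 (by simp)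
  have e0 := hc 0 (by simp) (1/2) (by constructor <;> norm_num)
  have e1 := hc (1/2) (by constructor <;> norm_num) 1 (by simp)
  rw [hc0] at e0 e01
  rw [hc1] at e1 e01
  norm_num [abs_of_pos] at e01 e0 e1
  set m := c (1 / 2) with hm
  have hLex : ∃ L, L = dist x (α • x) := ⟨_, rfl⟩
  obtain ⟨L, hL⟩ := hLex
  rw [← hL] at e01 hx ⊢
  have hαα : dist (α • x) (α • α • x) = L := by rw [hL, dist_smul]
  have h2 : dist x (α • α • x) = 2 * L := by
    refine le_antisymm ?_ ?_
    · have := dist_triangle x (α • x) (α • α • x)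
      linarith
    · have a1 : dist m (α • m) ≤ (dist m (α • x) + dist m (α • α • x)) / 2 :=
        hpt.dist_midpoint_le (by rw [dist_smul, hαα]; linarith) (by rw [dist_smul, hαα]; linarith)
      have a2 : dist (α • α • x) m ≤ (dist (α • α • x) x + dist (α • α • x) (α • x)) / 2 :=
        hpt.dist_midpoint_le (by linarith) (by linarith)
      rw [dist_comm _ m, dist_comm _ x, dist_comm _ (α • x)] at a2
      have := hx m
      linarith
  have hmid : ∀ n : ℕ, dist x (α ^ (n + 1) • x) ≤
      (dist x (α ^ n • x) + dist x (α ^ (n + 2) • x)) / 2 := by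
    intro n
    have b1 : α ^ (n + 1) • x = α ^ n • α • x := by rw [pow_succ, mul_smul]
    have b2 : α ^ (n + 2) • x = α ^ n • α • α • x := by rw [pow_succ, pow_succ, mul_smul, mul_smul]
    rw [b1, b2]
    refine hpt.dist_midpoint_le ?_ ?_
    · rw [dist_smul, dist_smul, h2]; linarith
    · rw [dist_smul (α ^ n), dist_smul (α ^ n), h2, hαα]; linarith
  have hstep : ∀ n : ℕ, L ≤ dist x (α ^ (n + 1) • x) - dist x (α ^ n • x) := by
    intro n
    induction n with
    | zero => simp [hL]
    | succ n ih => have := hmid n; linarith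
  induction n with
  | zero => simp
  | succ n ih => have := hstep n; push_cast; linarith

/-! ### Length functions on `ℤᵏ` -/

lemma subadditive_le {k : ℕ} (N : (Fin k → ℤ) → ℝ) (h0 : N 0 = 0)
    (hadd : ∀ a b, N (a + b) ≤ N a + N b) (hneg : ∀ a, N (-a) ≤ N a) {M : ℝ}
    (hM : ∀ i, N (Pi.single i 1) ≤ M) (a : Fin k → ℤ) : N a ≤ M * ∑ i, |(a i : ℝ)| := by
  have hnsmul : ∀ (n : ℕ) b, N (n • b) ≤ n * N b := by
    intro n b
    induction n with
    | zero => simp [h0]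
    | succ n ih =>
      rw [succ_nsmul]; push_cast
      linarith [hadd (n • b) b]
  have hs : N a ≤ ∑ i, N (a i • Pi.single i 1) := by
    have := Finset.le_sum_of_subadditive N h0.le hadd Finset.univ fun i => a i • Pi.single i (1 : ℤ)
    rwa [← pi_eq_sum_univ' a] at this
  refine hs.trans ?_
  rw [Finset.mul_sum]
  refine Finset.sum_le_sum fun i _ => ?_
  have hn := hnsmul (a i).natAbs (Pi.single i 1)
  have hc : (((a i).natAbs : ℕ) : ℝ) = |(a i : ℝ)| := by simp [Nat.cast_natAbs]
  have hle : N (a i • Pi.single i 1) ≤ N ((a i).natAbs • Pi.single i 1) := by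
    rcases Int.natAbs_eq (a i) with h | h
    · conv_lhs => rw [h]
      simp
    · conv_lhs => rw [h]
      rw [neg_smul, natCast_zsmul]
      exact hneg _
  rw [hc] at hn
  have := mul_le_mul_of_nonneg_left (hM i) (abs_nonneg (a i : ℝ))
  linarith

/-- Dirichlet's simultaneous approximation for the rational vector `a / T`, with denominators
cleared: the pigeonhole principle is applied to the multiples `0, a, …, Qᵏ a`, sorted by which of
the `Q` equal parts of `[0, T)` each residue mod `T` falls in. -/
lemma exists_simultaneous_approx {k : ℕ} (a : Fin k → ℤ) {T : ℤ} (hT : 0 < T) {Q : ℕ} (hQ : 0 < Q) :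
    ∃ q : ℕ, 0 < q ∧ q ≤ Q ^ k ∧ ∃ b : Fin k → ℤ, ∀ i, |q * a i - T * b i| * Q < T := by
  have hQ' : (0 : ℤ) < Q := by exact_mod_cast hQ
  have hbox : ∀ (n : ℕ) (i : Fin k), ((n * a i) % T * Q / T).toNat < Q := by
    intro n i
    have h1 := Int.emod_lt_of_pos (n * a i) hT
    have : (n * a i) % T * Q / T < Q := by
      rw [Int.ediv_lt_iff_lt_mul hT, mul_comm (Q : ℤ)]
      exact mul_lt_mul_of_pos_right h1 hQ'
    omega
  let f : Fin (Q ^ k + 1) → (Fin k → Fin Q) := fun n i => ⟨_, hbox n i⟩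
  obtain ⟨m, n, hmn, hf⟩ := Fintype.exists_ne_map_eq_of_card_lt f (by simp)
  wlog hlt : m < n generalizing m n
  · exact this n m hmn.symm hf.symm (lt_of_le_of_ne (not_lt.1 hlt) hmn.symm)
  have hlt' : (m : ℕ) < n := hlt
  refine ⟨n - m, by omega, by omega, fun i => (n * a i) / T - (m * a i) / T, fun i => ?_⟩
  have hfi : ((m : ℕ) * a i) % T * Q / T = ((n : ℕ) * a i) % T * Q / T := by
    have h := congrArg Fin.val (congrFun hf i)
    simp only [f] at h
    have p1 : 0 ≤ ((m : ℕ) * a i) % T * Q / T :=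
      Int.ediv_nonneg (mul_nonneg (Int.emod_nonneg _ hT.ne') hQ'.le) hT.le
    have p2 : 0 ≤ ((n : ℕ) * a i) % T * Q / T :=
      Int.ediv_nonneg (mul_nonneg (Int.emod_nonneg _ hT.ne') hQ'.le) hT.le
    omega
  have d1 := Int.emod_add_mul_ediv ((m : ℕ) * a i) T
  have d2 := Int.emod_add_mul_ediv ((n : ℕ) * a i) T
  have key : ((n - m : ℕ) : ℤ) * a i - T * ((n : ℕ) * a i / T - (m : ℕ) * a i / T)
      = ((n : ℕ) * a i) % T - ((m : ℕ) * a i) % T := by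
    rw [Nat.cast_sub hlt'.le]; linarith
  have habs (z : ℤ) : |z| * Q = |z * Q| := by rw [abs_mul, abs_of_pos hQ']
  rw [key, habs, sub_mul, abs_lt]
  have g1 := Int.emod_add_mul_ediv (((m : ℕ) * a i) % T * Q) T
  have g2 := Int.emod_add_mul_ediv (((n : ℕ) * a i) % T * Q) T
  have r1 := Int.emod_lt_of_pos (((m : ℕ) * a i) % T * Q) hT
  have r2 := Int.emod_lt_of_pos (((n : ℕ) * a i) % T * Q) hT
  have r3 := Int.emod_nonneg (((m : ℕ) * a i) % T * Q) hT.ne'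
  have r4 := Int.emod_nonneg (((n : ℕ) * a i) % T * Q) hT.ne'
  rw [hfi] at g1
  constructor <;> linarith

/-- A length function `N` on `ℤᵏ` whose stable length is at least `ε` on every nonzero vector
dominates a multiple of the `ℓ¹` norm. Given `a` with largest coordinate of absolute value `T`,
approximate `q a` by a multiple `T b` with `b ≠ 0` and `q` bounded; then `T ε ≤ N (T b)`, while
`N (T b)` is at most `q N a` plus a small multiple of `T`. -/
lemma exists_linear_lower_bound {k : ℕ} (N : (Fin k → ℤ) → ℝ) (h0 : N 0 = 0)
    (hadd : ∀ a b, N (a + b) ≤ N a + N b) (hneg : ∀ a, N (-a) ≤ N a)  {ε : ℝ} (hε : 0 < ε)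
    (hN : ∀ b ≠ 0, ∃ C : ℝ, ∀ n : ℕ, n * ε ≤ N (n • b) + C) :
    ∃ c > 0, ∀ a : Fin k → ℤ, c * ∑ i, |(a i : ℝ)| ≤ N a := by
  have hnn : ∀ a, 0 ≤ N a := by
    intro a
    have h1 := hadd a (-a)
    rw [add_neg_cancel, h0] at h1
    linarith [hneg a]
  have hnsmul : ∀ (n : ℕ) b, N (n • b) ≤ n * N b := by
    intro n b
    induction n with
    | zero => simp [h0]
    | succ n ih =>
      rw [succ_nsmul]; push_cast
      linarith [hadd (n • b) b]
  have hstable : ∀ b ≠ 0, ∀ m : ℕ, m * ε ≤ N (m • b) := by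
    intro b hb m
    obtain ⟨C, hC⟩ := hN b hb
    by_contra! hlt
    obtain ⟨n, hn⟩ := exists_nat_gt (C / (m * ε - N (m • b)))
    rw [div_lt_iff₀ (by linarith)] at hn
    have h1 := hC (n * m)
    have h2 := hnsmul n (m • b)
    rw [mul_smul] at h1
    push_cast at h1
    linarith
  have hMex : ∃ M : ℝ, 0 < M ∧ ∀ i : Fin k, N (Pi.single i 1) ≤ M := by
    refine ⟨1 + ∑ i : Fin k, N (Pi.single i 1), ?_, fun i => ?_⟩
    · have := Finset.sum_nonneg fun (i : Fin k) (_ : i ∈ Finset.univ) => hnn (Pi.single i 1)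
      linarith
    · have := Finset.single_le_sum (f := fun i : Fin k => N (Pi.single i 1))
        (fun i _ => hnn _) (Finset.mem_univ i)
      linarith
  obtain ⟨M, hM0, hM⟩ := hMex
  obtain ⟨Q, hQ⟩ := exists_nat_gt (2 * M * k / ε)
  have hQ0 : 0 < Q := by
    have : (0 : ℝ) < Q := lt_of_le_of_lt (by positivity) hQ
    exact_mod_cast this
  have hQR : (0 : ℝ) < Q := by exact_mod_cast hQ0
  rw [div_lt_iff₀ hε] at hQ
  have hmax : ∀ a : Fin k → ℤ, ∀ l : Fin k, (∀ i, |a i| ≤ |a l|) → a l ≠ 0 →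
      ε * |(a l : ℝ)| ≤ 2 * (Q : ℝ) ^ k * N a := by
    intro a l hl hal
    have hT : 0 < |a l| := abs_pos.2 hal
    obtain ⟨q, hq0, hqQ, b, hb⟩ := exists_simultaneous_approx a hT hQ0
    set T := |a l| with hTdef
    -- for `b = 0` the `l`-th coordinate of the approximation would read `q * T * Q < T`
    have hb0 : b ≠ 0 := by
      rintro rfl
      have h := hb l
      simp only [Pi.zero_apply, mul_zero, sub_zero, abs_mul, Nat.abs_cast, ← hTdef] at h
      have hq1 : (1 : ℤ) ≤ q := by exact_mod_cast hq0
      have hQ1 : (1 : ℤ) ≤ Q := by exact_mod_cast hQ0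
      have := mul_le_mul_of_nonneg_right hq1 hT.le
      nlinarith
    obtain ⟨t, ht⟩ := Int.eq_ofNat_of_zero_le hT.le
    rw [ht] at hb
    have htR : |(a l : ℝ)| = t := by
      rw [← Int.cast_abs, ← hTdef, ht]; simp
    have hw := subadditive_le N h0 hadd hneg hM (q • a - t • b)
    have hsum : (∑ i, |(((q • a - t • b) i : ℤ) : ℝ)|) * Q ≤ k * t := by
      rw [Finset.sum_mul]
      have := Finset.sum_le_card_nsmul Finset.univ
        (fun i => |(((q • a - t • b) i : ℤ) : ℝ)| * Q) (t : ℝ) (fun i _ => by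
          have h := (hb i).le
          simp only [Pi.sub_apply, nsmul_eq_mul]
          exact_mod_cast h)
      simpa using this
    have htb : N (t • b) ≤ q * N a + N (q • a - t • b) := by
      have h1 := hadd (q • a) (-(q • a - t • b))
      rw [show q • a + -(q • a - t • b) = t • b by abel] at h1
      linarith [hneg (q • a - t • b), hnsmul q a]
    have hlow := hstable b hb0 t
    have hqQ' : (q : ℝ) ≤ (Q : ℝ) ^ k := by exact_mod_cast hqQ
    have h2 : (q : ℝ) * N a ≤ (Q : ℝ) ^ k * N a := mul_le_mul_of_nonneg_right hqQ' (hnn a)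
    have ht0 : (0 : ℝ) ≤ t := Nat.cast_nonneg t
    -- the choice of `Q` makes the approximation error cost at most half of `t * ε`
    have h3 : 2 * (N (q • a - t • b) * Q) ≤ t * (Q * ε) := by
      have i1 := mul_le_mul_of_nonneg_right hw hQR.le
      have i2 := mul_le_mul_of_nonneg_left hsum hM0.le
      have i3 := mul_le_mul_of_nonneg_left hQ.le ht0
      linarith
    have h4 : 2 * N (q • a - t • b) ≤ t * ε := by
      refine le_of_mul_le_mul_right ?_ hQR
      linarith
    rw [htR]
    linarith
  refine ⟨ε / (2 * (Q : ℝ) ^ k * (k + 1)), by positivity, fun a => ?_⟩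
  rw [div_mul_eq_mul_div, div_le_iff₀ (by positivity)]
  by_cases ha : a = 0
  · simp [ha, h0]
  obtain ⟨i₀, hi₀⟩ := Function.ne_iff.1 ha
  obtain ⟨l, -, hl⟩ := Finset.univ.exists_max_image (fun i => |a i|) ⟨i₀, Finset.mem_univ _⟩
  have hl' : ∀ i, |a i| ≤ |a l| := fun i => hl i (Finset.mem_univ i)
  have hal : a l ≠ 0 := abs_pos.1 ((abs_pos.2 hi₀).trans_le (hl' i₀))
  have h1 := hmax a l hl' hal
  have h2 : ∑ i, |(a i : ℝ)| ≤ k * |(a l : ℝ)| := by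
    have := Finset.sum_le_card_nsmul Finset.univ (fun i => |(a i : ℝ)|) |(a l : ℝ)|
      (fun i _ => by exact_mod_cast hl' i)
    simpa using this
  have h3 : 0 ≤ N a * (2 * (Q : ℝ) ^ k) := mul_nonneg (hnn a) (by positivity)
  have h4 := mul_le_mul_of_nonneg_left h2 hε.le
  have h5 := mul_le_mul_of_nonneg_left h1 (Nat.cast_nonneg k : (0 : ℝ) ≤ k)
  nlinarith

/-! ### Word norms -/

lemma wordNorm_prod_le {G : Type*} [Group G] {S : Set G} (l : List G)
    (hl : ∀ a ∈ l, a ∈ S ∨ a⁻¹ ∈ S) : wordNorm S l.prod ≤ l.length :=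
  Nat.sInf_le ⟨l, rfl, hl, rfl⟩

/-- For a generating set the infimum defining `wordNorm` is over a nonempty set, so it is attained. -/
lemma exists_word {G : Type*} [Group G] {S : Set G} (hS : Subgroup.closure S = ⊤) (g : G) :
    ∃ l : List G, l.length = wordNorm S g ∧ (∀ a ∈ l, a ∈ S ∨ a⁻¹ ∈ S) ∧ l.prod = g := by
  have hne : {n | ∃ l : List G, l.length = n ∧ (∀ a ∈ l, a ∈ S ∨ a⁻¹ ∈ S) ∧ l.prod = g}.Nonempty := by
    have hg : g ∈ Submonoid.closure (S ∪ S⁻¹) := by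
      rw [← Subgroup.closure_toSubmonoid, hS]; trivial
    obtain ⟨l, hl, hg⟩ := Submonoid.exists_list_of_mem_closure hg
    exact ⟨l.length, l, rfl, hl, hg⟩
  exact Nat.sInf_mem hne

lemma wordNorm_one {G : Type*} [Group G] (S : Set G) : wordNorm S 1 = 0 :=
  Nat.le_zero.1 (wordNorm_prod_le (S := S) [] (by simp))

lemma wordNorm_mul_le {G : Type*} [Group G] {S : Set G} (hS : Subgroup.closure S = ⊤) (g h : G) :
    wordNorm S (g * h) ≤ wordNorm S g + wordNorm S h := by
  obtain ⟨l, hl, hlS, rfl⟩ := exists_word hS g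
  obtain ⟨l', hl', hlS', rfl⟩ := exists_word hS h
  rw [← hl, ← hl', ← List.prod_append, ← List.length_append]
  refine wordNorm_prod_le _ fun a ha => ?_
  rcases List.mem_append.1 ha with h | h
  exacts [hlS a h, hlS' a h]

lemma wordNorm_inv_le {G : Type*} [Group G] {S : Set G} (hS : Subgroup.closure S = ⊤) (g : G) :
    wordNorm S g⁻¹ ≤ wordNorm S g := by
  obtain ⟨l, hl, hlS, rfl⟩ := exists_word hS g
  rw [← hl, List.prod_inv_reverse]
  refine (wordNorm_prod_le _ fun a ha => ?_).trans_eq (by simp)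
  simp only [List.mem_reverse, List.mem_map] at ha
  obtain ⟨b, hb, rfl⟩ := ha
  simpa [or_comm] using hlS b hb

/-- Every length function is dominated by a multiple of the word norm. -/
lemma exists_le_mul_wordNorm {G : Type*} [Group G] (S : Finset G)
    (hS : Subgroup.closure (S : Set G) = ⊤) (f : G → ℝ) (h1 : f 1 = 0)
    (hmul : ∀ a b, f (a * b) ≤ f a + f b) (hinv : ∀ a, f a⁻¹ ≤ f a) :
    ∃ M : ℝ, 0 < M ∧ ∀ g, f g ≤ M * wordNorm (S : Set G) g := by
  have hnn : ∀ a, 0 ≤ f a := by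
    intro a
    have := hmul a a⁻¹
    rw [mul_inv_cancel, h1] at this
    linarith [hinv a]
  have hM : ∀ s ∈ S, f s ≤ 1 + ∑ s ∈ S, f s := by
    intro s hs
    have := Finset.single_le_sum (f := f) (fun i _ => hnn i) hs
    linarith
  refine ⟨1 + ∑ s ∈ S, f s, ?_, fun g => ?_⟩
  · have := Finset.sum_nonneg fun s (_ : s ∈ S) => hnn s
    linarith
  · obtain ⟨l, hl, hlS, rfl⟩ := exists_word hS g
    rw [← hl]
    clear hl
    induction l with
    | nil => simp [h1]
    | cons a l ih =>
      have ha : f a ≤ 1 + ∑ s ∈ S, f s := by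
        rcases hlS a (by simp) with h | h
        · exact hM a h
        · have := hinv a⁻¹
          rw [inv_inv] at this
          exact this.trans (hM _ h)
      have := ih fun b hb => hlS b (by simp [hb])
      rw [List.prod_cons, List.length_cons]
      push_cast
      linarith [hmul a l.prod]

/-! ### Straightness -/

/-- The theorem for an abstract isometric action, with the free abelian subgroup identified with
`ℤᵏ`; the generating sets on both sides are arbitrary finite ones. -/
lemma exists_norm_equiv {X G : Type*} [MetricSpace X] [Nonempty X] [Group G] [MulAction G X]
    [IsIsometricSMul G X] (hgeo : IsGeodesicSpace X) (hpt : IsPtolemy X)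
    (hproper : ∀ x : X, ∃ r > 0, {γ : G | dist x (γ • x) < r}.Finite)
    (hcocompact : ∃ K : Set X, IsCompact K ∧ ∀ x : X, ∃ γ : G, ∃ k ∈ K, γ • k = x)
    (A : Subgroup G) {k : ℕ} (φ : A ≃* Multiplicative (Fin k → ℤ)) :
    ∃ S : Finset G, Subgroup.closure (S : Set G) = ⊤ ∧
    ∃ S₀ : Finset A, Subgroup.closure (S₀ : Set A) = ⊤ ∧
    ∃ c : ℝ, 1 ≤ c ∧ ∀ g : A,
      (1 / c) * (wordNorm (S₀ : Set A) g : ℝ) ≤ (wordNorm (S : Set G) (g : G) : ℝ) ∧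
      (wordNorm (S : Set G) (g : G) : ℝ) ≤ c * (wordNorm (S₀ : Set A) g : ℝ) := by
  obtain ⟨K, hK, hcov⟩ := hcocompact
  obtain ⟨ε, hε, hfin⟩ := exists_finite_near hproper hK
  have hdisp := finite_displaced hgeo hcov hε hfin
  obtain ⟨δ, hδ, hgap⟩ := exists_displacement_gap hproper hK hcov hdisp
  obtain ⟨S, hScl⟩ : ∃ S : Finset G, Subgroup.closure (S : Set G) = ⊤ := by
    refine ⟨hfin.toFinset, ?_⟩
    rw [Set.Finite.coe_toFinset, eq_top_iff]
    rintro γ -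
    obtain ⟨-, k, hk, -⟩ := hcov (Classical.arbitrary X)
    obtain ⟨n, hn⟩ := exists_nat_gt (dist k (γ • k) / ε)
    rw [div_lt_iff₀ hε] at hn
    exact (finite_and_generated hgeo hcov hfin n).2 ⟨k, hk, k, hk, by nlinarith⟩
  obtain ⟨S₀, hS₀cl⟩ : ∃ S₀ : Finset A, Subgroup.closure (S₀ : Set A) = ⊤ := by
    have : Group.FG A := Group.fg_of_surjective (f := φ.symm.toMonoidHom) φ.symm.surjective
    exact Group.fg_def.1 this
  refine ⟨S, hScl, S₀, hS₀cl, ?_⟩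
  -- the orbit metric `D` mediates between the two word norms
  let o : X := Classical.arbitrary X
  let D : G → ℝ := fun g => dist o (g • o)
  have hD1 : D 1 = 0 := by simp [D]
  have hDmul : ∀ a b, D (a * b) ≤ D a + D b := by
    intro a b
    have := dist_triangle o (a • o) (a • b • o)
    rw [dist_smul] at this
    simpa [D, mul_smul] using this
  have hDinv : ∀ a, D a⁻¹ ≤ D a := by
    intro a
    have : dist o (a⁻¹ • o) = dist (a • o) o := by rw [← dist_smul a, smul_inv_smul]
    simp only [D]
    rw [this, dist_comm]
  let ψ : (Fin k → ℤ) → A := fun v => φ.symm (Multiplicative.ofAdd v)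
  have hψ0 : ψ 0 = 1 := by simp [ψ]
  have hψadd : ∀ a b, ψ (a + b) = ψ a * ψ b := by simp [ψ]
  have hψneg : ∀ a, ψ (-a) = (ψ a)⁻¹ := by simp [ψ]
  have hψpow : ∀ (n : ℕ) a, ψ (n • a) = ψ a ^ n := fun n a => by
    simp only [ψ, ofAdd_nsmul, map_pow]
  have hψinj : ∀ a, ψ a = 1 → a = 0 := by simp [ψ]
  have hψsurj : ∀ g, ∃ a, ψ a = g := fun g => ⟨Multiplicative.toAdd (φ g), by simp [ψ]⟩
  obtain ⟨c₁, hc₁, hlow⟩ := exists_linear_lower_bound (fun v => D (ψ v)) (by simp [hψ0, hD1])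
    (fun a b => by simpa [hψadd] using hDmul (ψ a) (ψ b))
    (fun a => by simpa [hψneg] using hDinv (ψ a)) hδ (by
      intro b hb
      have hord : ¬ IsOfFinOrder (ψ b : G) := by
        rw [isOfFinOrder_iff_pow_eq_one]
        rintro ⟨n, hn, h⟩
        have h' : ψ (n • b) = 1 := by rw [hψpow]; exact_mod_cast h
        rcases smul_eq_zero.1 (hψinj _ h') with h0 | h0
        exacts [hn.ne' h0, hb h0]
      obtain ⟨x, hx⟩ := exists_min_displacement hK hcov hdisp (ψ b : G)
      refine ⟨2 * dist x o, fun n => ?_⟩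
      have h1 := hpt.mul_le_dist_pow hgeo hx n
      have h2 := mul_le_mul_of_nonneg_left (hgap _ hord x) (Nat.cast_nonneg n : (0 : ℝ) ≤ n)
      have h3 := dist_triangle4 x o ((ψ b : G) ^ n • o) ((ψ b : G) ^ n • x)
      rw [dist_smul, dist_comm o x] at h3
      simp only [hψpow, D, SubmonoidClass.coe_pow]
      linarith)
  obtain ⟨M₁, hM₁, hup⟩ := exists_le_mul_wordNorm S hScl D hD1 hDmul hDinv
  obtain ⟨M₂, hM₂, hres⟩ := exists_le_mul_wordNorm S₀ hS₀cl
    (fun g => (wordNorm (S : Set G) (g : G) : ℝ)) (by simp [wordNorm_one])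
    (fun a b => by exact_mod_cast wordNorm_mul_le hScl (a : G) b)
    (fun a => by exact_mod_cast wordNorm_inv_le hScl (a : G))
  let M₃ : ℝ := 1 + ∑ i : Fin k, (wordNorm (S₀ : Set A) (ψ (Pi.single i 1)) : ℝ)
  have hM₃ : 0 < M₃ := by positivity
  have hcoord := subadditive_le (fun v => (wordNorm (S₀ : Set A) (ψ v) : ℝ))
    (by simp [hψ0, wordNorm_one])
    (fun a b => by simpa only [hψadd] using mod_cast wordNorm_mul_le hS₀cl (ψ a) (ψ b))
    (fun a => by simpa only [hψneg] using mod_cast wordNorm_inv_le hS₀cl (ψ a))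
    (M := M₃) (fun i => by
      have := Finset.single_le_sum
        (f := fun i : Fin k => (wordNorm (S₀ : Set A) (ψ (Pi.single i 1)) : ℝ))
        (fun i _ => Nat.cast_nonneg _) (Finset.mem_univ i)
      simp only [M₃]
      linarith)
  refine ⟨1 + M₂ + M₃ * M₁ / c₁, ?_, fun g => ⟨?_, ?_⟩⟩
  · have : 0 ≤ M₃ * M₁ / c₁ := by positivity
    linarith
  · have hpos : 0 < 1 + M₂ + M₃ * M₁ / c₁ := by positivity
    rw [one_div_mul_eq_div, div_le_iff₀ hpos]
    obtain ⟨a, rfl⟩ := hψsurj g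
    have h1 : ∑ i, |(a i : ℝ)| ≤ M₁ * wordNorm (S : Set G) (ψ a : G) / c₁ := by
      rw [le_div_iff₀ hc₁]
      linarith [hlow a, hup (ψ a : G)]
    have h2 := mul_le_mul_of_nonneg_left h1 hM₃.le
    have h3 : (0 : ℝ) ≤ wordNorm (S : Set G) (ψ a : G) := Nat.cast_nonneg _
    have h4 : M₃ * (M₁ * wordNorm (S : Set G) (ψ a : G) / c₁)
        = wordNorm (S : Set G) (ψ a : G) * (M₃ * M₁ / c₁) := by ring
    have h5 := mul_nonneg h3 hM₂.le
    linarith [hcoord a]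
  · have h3 : (0 : ℝ) ≤ wordNorm (S₀ : Set A) g := Nat.cast_nonneg _
    have h4 : 0 ≤ M₃ * M₁ / c₁ := by positivity
    have h5 := mul_nonneg h4 h3
    linarith [hres g]

/-- **Theorem 1.3.** Let `X` be a geodesic Ptolemy metric space and let `Γ ⊂ ISO(X)` act
properly and cocompactly on `X`. Then every finitely generated free abelian subgroup `Γ₀` of
`Γ` is straight in `Γ`: the word norm of `Γ₀` and the restriction to `Γ₀` of the word norm of
`Γ` (with respect to suitable finite generating sets) are equivalent. -/
theorem free_abelian_subgroups_are_straight
    {X : Type*} [MetricSpace X]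
    (hgeo : IsGeodesicSpace X) (hpt : IsPtolemy X)
    (Γ : Subgroup (X ≃ᵢ X))
    (hproper : ∀ x : X, ∃ r > 0, {γ : Γ | dist x ((γ : X ≃ᵢ X) x) < r}.Finite)
    (hcocompact : ∃ K : Set X, IsCompact K ∧ ∀ x : X, ∃ γ : Γ, ∃ k ∈ K, (γ : X ≃ᵢ X) k = x)
    (Γ₀ : Subgroup Γ)
    (hfree : ∃ k : ℕ, Nonempty (Γ₀ ≃* Multiplicative (Fin k → ℤ))) :
    ∃ S : Finset Γ, Subgroup.closure (S : Set Γ) = ⊤ ∧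
    ∃ S₀ : Finset Γ₀, Subgroup.closure (S₀ : Set Γ₀) = ⊤ ∧
    ∃ c : ℝ, 1 ≤ c ∧ ∀ g : Γ₀,
      (1 / c) * (wordNorm (S₀ : Set Γ₀) g : ℝ) ≤ (wordNorm (S : Set Γ) (g : Γ) : ℝ) ∧
      (wordNorm (S : Set Γ) (g : Γ) : ℝ) ≤ c * (wordNorm (S₀ : Set Γ₀) g : ℝ) := by
  obtain ⟨k, ⟨φ⟩⟩ := hfree
  rcases isEmpty_or_nonempty X with hX | hX
  · -- `X ≃ᵢ X` is trivial when `X` is empty, so both word norms vanish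
    have hsub : Subsingleton (X ≃ᵢ X) := ⟨fun f g => by ext x; exact hX.elim x⟩
    refine ⟨∅, Subsingleton.elim _ _, ∅, Subsingleton.elim _ _, 1, le_rfl, fun g => ?_⟩
    obtain rfl : g = 1 := Subsingleton.elim _ _
    simp [wordNorm_one]
  · let _ : MulAction Γ X :=
      { smul := fun γ x => (γ : X ≃ᵢ X) x
        one_smul := fun _ => rfl
        mul_smul := fun _ _ _ => rfl }
    have : IsIsometricSMul Γ X := ⟨fun γ => (γ : X ≃ᵢ X).isometry⟩
    exact exists_norm_equiv hgeo hpt hproper hcocompact Γ₀ φ
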